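/- Let A be an infinite set of positive integers and let m = {(k_1,m_1),...,(k_r,m_r)} be a configuration whose degree s = gcd(m_1,...,m_r) satisfies s ≥ 2. Then the representation function r_m(n,A) is not eventually constant: for every constant c and every N there exists n > N with r_m(n,A) ≠ c. -/

import Mathlib

/-- The representation function `r_m(n, A)` associated to the configuration
`{(k 0, m 0), ..., (k (r-1), m (r-1))}`. -/
noncomputable def reprFn (A : Set ℕ) (r : ℕ) (k m : Fin r → ℕ) (n : ℕ) : ℕ :=
  Nat.card {a : (i : Fin r) → Fin (m i) → ℕ //
    (∀ i j, a i j ∈ A) ∧ n = ∑ i, k i * ∑ j, a i j}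

/-!
The generating function of `r_m(·, A)` is `∏ i, A(X ^ k i) ^ m i`, where `A(X) = ∑ a ∈ A, X ^ a`,
so it is `G ^ s` for some `G ∈ ℕ⟦X⟧`. Suppose its coefficients are eventually equal to `c ≠ 0`.
Then the coefficients of `G` are bounded and `Q := (1 - X) * G ^ s` is a polynomial with
`Q(1) = c`. Differentiating, `s * Q * (1 - X) * G' = (Q' * (1 - X) + Q) * G`, so the derivative of
`W := s * Q * (1 - X) * G` has bounded coefficients; since `W` has integer coefficients, it is a
polynomial. In `W ^ s * (1 - X) = (1 - X) ^ s * (s ^ s * Q ^ (s + 1))` the exponent of the prime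
`1 - X` is `≡ 1 mod s` on the left and equal to `s` on the right, which is impossible for `s ≥ 2`.
Hence `c = 0`, that is, `G ^ s` is a polynomial, which is false because `A` is infinite.
-/

open Filter
open scoped PowerSeries Polynomial PowerSeries.derivative

theorem dvd_of_pow_mul_eq_pow_mul {M : Type*} [CommMonoidWithZero M] [IsCancelMulZero M]
    {p a b : M} (hp : Prime p) {s : ℕ} (hs : 2 ≤ s) (h : a ^ s * p = p ^ s * b) : p ∣ b := by
  obtain ⟨t, rfl⟩ := Nat.exists_eq_add_of_le' hs
  have ha : a ^ (t + 2) = p ^ (t + 1) * b :=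
    mul_right_cancel₀ hp.ne_zero (by rw [h, pow_succ p (t + 1), mul_right_comm])
  obtain ⟨v, rfl⟩ : p ∣ a :=
    hp.dvd_of_dvd_pow (ha ▸ (dvd_pow_self p t.succ_ne_zero).mul_right b)
  refine ⟨v ^ (t + 2), mul_left_cancel₀ (pow_ne_zero (t + 1) hp.ne_zero) ?_⟩
  rw [← ha, mul_pow, pow_succ p (t + 1), mul_assoc]

theorem exists_pow_eq_prod_pow {ι M : Type*} [CommMonoid M] (t : Finset ι) (f : ι → M)
    {m : ι → ℕ} {s : ℕ} (h : ∀ i ∈ t, s ∣ m i) : ∃ g, ∏ i ∈ t, f i ^ m i = g ^ s := by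
  refine ⟨∏ i ∈ t, f i ^ (m i / s), ?_⟩
  rw [← Finset.prod_pow]
  exact Finset.prod_congr rfl fun i hi => by rw [← pow_mul, Nat.div_mul_cancel (h i hi)]

section EventuallyConstant

variable {R : Type*}

theorem exists_eq_trunc_add_of_eventually_coeff_eq [CommSemiring R] {f : R⟦X⟧} {c : R}
    (h : ∀ᶠ n in atTop, f.coeff n = c) :
    ∃ N, f = (f.trunc N : R⟦X⟧) + PowerSeries.C c * (PowerSeries.X ^ N * PowerSeries.mk 1) := by
  obtain ⟨N, hN⟩ := eventually_atTop.1 h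
  have htail : (PowerSeries.mk fun i => f.coeff (i + N)) = PowerSeries.C c * PowerSeries.mk 1 := by
    ext n
    simp [hN (n + N) (Nat.le_add_left N n)]
  refine ⟨N, ?_⟩
  rw [mul_left_comm, ← htail, add_comm (f.trunc N : R⟦X⟧)]
  exact f.eq_X_pow_mul_shift_add_trunc N

theorem exists_coe_eq_of_eventually_coeff_eq_zero [CommSemiring R] {f : R⟦X⟧}
    (h : ∀ᶠ n in atTop, f.coeff n = 0) : ∃ P : R[X], (P : R⟦X⟧) = f := by
  obtain ⟨N, hN⟩ := exists_eq_trunc_add_of_eventually_coeff_eq h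
  exact ⟨f.trunc N, by simpa using hN.symm⟩

theorem exists_coe_eq_one_sub_X_mul_of_eventually_coeff_eq [CommRing R] {f : R⟦X⟧} {c : R}
    (h : ∀ᶠ n in atTop, f.coeff n = c) :
    ∃ Q : R[X], (Q : R⟦X⟧) = (1 - PowerSeries.X) * f ∧ Q.eval 1 = c := by
  obtain ⟨N, hN⟩ := exists_eq_trunc_add_of_eventually_coeff_eq h
  refine ⟨(1 - Polynomial.X) * f.trunc N + Polynomial.C c * Polynomial.X ^ N, ?_, by simp⟩
  conv_rhs => rw [hN]
  push_cast
  linear_combination -PowerSeries.C c * PowerSeries.X ^ N *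
    PowerSeries.mk_one_mul_one_sub_eq_one R

end EventuallyConstant

/-- The power series `f` has bounded coefficients. This is the growth condition under which an
integral solution of a first-order linear differential equation has to be rational. -/
def HasBoundedCoeffs {R : Type*} [Ring R] [LinearOrder R] (f : R⟦X⟧) : Prop :=
  ∃ B, ∀ n, |f.coeff n| ≤ B

namespace HasBoundedCoeffs

variable {R : Type*} [CommRing R] [LinearOrder R] [IsStrictOrderedRing R] {f g : R⟦X⟧}

theorem add (hf : HasBoundedCoeffs f) (hg : HasBoundedCoeffs g) : HasBoundedCoeffs (f + g) := by
  obtain ⟨B, hB⟩ := hf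
  obtain ⟨C, hC⟩ := hg
  exact ⟨B + C, fun n => by
    simpa only [map_add] using (abs_add_le _ _).trans (add_le_add (hB n) (hC n))⟩

theorem C_mul (hf : HasBoundedCoeffs f) (a : R) : HasBoundedCoeffs (PowerSeries.C a * f) := by
  obtain ⟨B, hB⟩ := hf
  exact ⟨|a| * B, fun n => by
    simpa only [PowerSeries.coeff_C_mul, abs_mul] using
      mul_le_mul_of_nonneg_left (hB n) (abs_nonneg a)⟩

theorem X_pow_mul (hf : HasBoundedCoeffs f) (e : ℕ) :
    HasBoundedCoeffs (PowerSeries.X ^ e * f) := by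
  obtain ⟨B, hB⟩ := hf
  refine ⟨B, fun n => ?_⟩
  rw [PowerSeries.coeff_X_pow_mul']
  split_ifs
  · exact hB _
  · simpa only [abs_zero] using (abs_nonneg _).trans (hB 0)

theorem polynomial_mul (hf : HasBoundedCoeffs f) (P : R[X]) :
    HasBoundedCoeffs ((P : R⟦X⟧) * f) := by
  induction P using Polynomial.induction_on' with
  | add P Q hP hQ =>
    rw [Polynomial.coe_add, add_mul]
    exact hP.add hQ
  | monomial e a =>
    rw [← Polynomial.C_mul_X_pow_eq_monomial, Polynomial.coe_mul, Polynomial.coe_C,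
      Polynomial.coe_pow, Polynomial.coe_X, mul_assoc]
    exact (hf.X_pow_mul e).C_mul a

theorem exists_coe_eq_of_derivative {f : ℤ⟦X⟧} (hf : HasBoundedCoeffs (d⁄dX ℤ f)) :
    ∃ P : ℤ[X], (P : ℤ⟦X⟧) = f := by
  obtain ⟨B, hB⟩ := hf
  refine exists_coe_eq_of_eventually_coeff_eq_zero
    ((eventually_ge_atTop (B.toNat + 1)).mono fun n hn => ?_)
  obtain ⟨n, rfl⟩ := Nat.exists_eq_add_of_le' (Nat.one_le_of_lt hn)
  have hn_bound : |f.coeff (n + 1) * ((n : ℤ) + 1)| ≤ B := by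
    simpa only [PowerSeries.coeff_derivative] using hB n
  have hmul : f.coeff (n + 1) * ((n : ℤ) + 1) = 0 :=
    Int.eq_zero_of_abs_lt_dvd (dvd_mul_left _ _) (by omega)
  exact (mul_eq_zero.1 hmul).resolve_right (by omega)

theorem exists_coe_eq_mul_of_mul_derivative_eq {g : ℤ⟦X⟧} (hg : HasBoundedCoeffs g) {T U : ℤ[X]}
    (h : (T : ℤ⟦X⟧) * d⁄dX ℤ g = U * g) : ∃ W : ℤ[X], (W : ℤ⟦X⟧) = T * g := by
  have hderiv : d⁄dX ℤ (T * g) = ((U + Polynomial.derivative T : ℤ[X]) : ℤ⟦X⟧) * g := by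
    rw [Derivation.leibniz, smul_eq_mul, smul_eq_mul, h, PowerSeries.derivative_coe,
      Polynomial.coe_add]
    ring
  exact exists_coe_eq_of_derivative (hderiv ▸ hg.polynomial_mul _)

end HasBoundedCoeffs

theorem mul_derivative_eq_of_coe_eq_one_sub_X_mul_pow {R : Type*} [CommRing R] {g : R⟦X⟧}
    {Q : R[X]} {s : ℕ} (hQ : (Q : R⟦X⟧) = (1 - PowerSeries.X) * g ^ s) :
    (((s : R[X]) * Q * (1 - Polynomial.X) : R[X]) : R⟦X⟧) * d⁄dX R g =
      ((Polynomial.derivative Q * (1 - Polynomial.X) + Q : R[X]) : R⟦X⟧) * g := by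
  have hderiv : ((Polynomial.derivative Q : R[X]) : R⟦X⟧) =
      (1 - PowerSeries.X) * ((s : R⟦X⟧) * g ^ (s - 1) * d⁄dX R g) - g ^ s := by
    rw [← PowerSeries.derivative_coe, hQ, Derivation.leibniz, PowerSeries.derivative_pow, map_sub,
      PowerSeries.derivative_one, PowerSeries.derivative_X, smul_eq_mul, smul_eq_mul]
    ring
  have hpow : (s : R⟦X⟧) * (g ^ (s - 1) * g) = s * g ^ s := by cases s <;> simp [pow_succ]
  have hcast : ((s : R[X]) : R⟦X⟧) = s := map_natCast Polynomial.coeToPowerSeries.ringHom s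
  push_cast
  rw [hcast, hderiv, hQ]
  linear_combination -(1 - PowerSeries.X) ^ 2 * d⁄dX R g * hpow

theorem eq_zero_of_eventually_coeff_pow_eq {g : ℤ⟦X⟧} (hg : HasBoundedCoeffs g) {s : ℕ}
    (hs : 2 ≤ s) {c : ℤ} (h : ∀ᶠ n in atTop, (g ^ s).coeff n = c) : c = 0 := by
  obtain ⟨Q, hQ, hQc⟩ := exists_coe_eq_one_sub_X_mul_of_eventually_coeff_eq h
  obtain ⟨W, hW⟩ := hg.exists_coe_eq_mul_of_mul_derivative_eq
    (mul_derivative_eq_of_coe_eq_one_sub_X_mul_pow hQ)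
  have hWs : W ^ s * (1 - Polynomial.X) =
      (1 - Polynomial.X) ^ s * ((s : ℤ[X]) ^ s * Q ^ (s + 1)) := by
    apply Polynomial.coe_injective ℤ
    push_cast at hW ⊢
    calc (W : ℤ⟦X⟧) ^ s * (1 - PowerSeries.X)
        = ((s : ℤ[X]) : ℤ⟦X⟧) ^ s * (Q : ℤ⟦X⟧) ^ s * (1 - PowerSeries.X) ^ s *
            ((1 - PowerSeries.X) * g ^ s) := by rw [hW]; simp only [mul_pow]; ring
      _ = (1 - PowerSeries.X) ^ s *
            (((s : ℤ[X]) : ℤ⟦X⟧) ^ s * (Q : ℤ⟦X⟧) ^ (s + 1)) := by rw [← hQ]; ring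
  have hprime : Prime (1 - Polynomial.X : ℤ[X]) := by
    simpa using (Polynomial.prime_X_sub_C (1 : ℤ)).neg
  have heval : (s : ℤ) ^ s * c ^ (s + 1) = 0 := by
    simpa [hQc] using Polynomial.eval_dvd (x := 1) (dvd_of_pow_mul_eq_pow_mul hprime hs hWs)
  have hs0 : (s : ℤ) ^ s ≠ 0 := pow_ne_zero s (by omega)
  exact eq_zero_of_pow_eq_zero ((mul_eq_zero.1 heval).resolve_left hs0)

theorem exists_coeff_le_coeff_add_of_dvd {F P : ℕ⟦X⟧} (h : F ∣ P) (hP : P ≠ 0) :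
    ∃ b, ∀ n, F.coeff n ≤ P.coeff (n + b) := by
  obtain ⟨H, rfl⟩ := h
  obtain ⟨b, hb⟩ := (PowerSeries.exists_coeff_ne_zero_iff_ne_zero).2 (right_ne_zero_of_mul hP)
  refine ⟨b, fun n => ?_⟩
  calc F.coeff n ≤ F.coeff n * H.coeff b := Nat.le_mul_of_pos_right _ (Nat.pos_of_ne_zero hb)
    _ ≤ ∑ p ∈ Finset.HasAntidiagonal.antidiagonal (n + b), F.coeff p.1 * H.coeff p.2 :=
      Finset.single_le_sum (f := fun p : ℕ × ℕ => F.coeff p.1 * H.coeff p.2)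
        (fun _ _ => Nat.zero_le _)
        (Finset.HasAntidiagonal.mem_antidiagonal.2 (rfl : (n, b).1 + (n, b).2 = n + b))
    _ = (F * H).coeff (n + b) := (PowerSeries.coeff_mul ..).symm

theorem eq_zero_of_eventually_coeff_pow_eq_nat {G : ℕ⟦X⟧} {s : ℕ} (hs : 2 ≤ s) {c : ℕ}
    (h : ∀ᶠ n in atTop, (G ^ s).coeff n = c) : c = 0 := by
  have hs0 : s ≠ 0 := by omega
  rcases eq_or_ne G 0 with rfl | hG
  · obtain ⟨n, hn⟩ := h.exists
    simpa [hs0] using hn.symm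
  obtain ⟨b, hb⟩ := exists_coeff_le_coeff_add_of_dvd (dvd_pow_self G hs0) (pow_ne_zero s hG)
  obtain ⟨B, hB⟩ : BddAbove (Set.range fun n => (G ^ s).coeff n) :=
    (tendsto_nhds_of_eventually_eq h).bddAbove_range
  have hbound : HasBoundedCoeffs (G.map (Nat.castRingHom ℤ)) :=
    ⟨B, fun n => by simpa using (hb n).trans (hB ⟨n + b, rfl⟩)⟩
  have hconst : ∀ᶠ n in atTop, ((G.map (Nat.castRingHom ℤ)) ^ s).coeff n = (c : ℤ) :=
    h.mono fun n hn => by rw [← map_pow, PowerSeries.coeff_map, hn, eq_natCast]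
  exact_mod_cast eq_zero_of_eventually_coeff_pow_eq hbound hs hconst

/-- The generating function `∑ a ∈ S, X ^ a` of a set `S` of natural numbers. -/
noncomputable def indicatorSeries (S : Set ℕ) : ℕ⟦X⟧ :=
  PowerSeries.mk (S.indicator 1)

theorem coeff_indicatorSeries_ne_zero {S : Set ℕ} {n : ℕ} :
    (indicatorSeries S).coeff n ≠ 0 ↔ n ∈ S := by
  simp [indicatorSeries]

theorem indicatorSeries_ne_zero {S : Set ℕ} (hS : S.Nonempty) : indicatorSeries S ≠ 0 := by
  obtain ⟨n, hn⟩ := hS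
  exact PowerSeries.exists_coeff_ne_zero_iff_ne_zero.1 ⟨n, coeff_indicatorSeries_ne_zero.2 hn⟩

theorem coeff_prod_indicatorSeries {ι : Type*} [Fintype ι] (S : ι → Set ℕ) (n : ℕ) :
    (∏ p, indicatorSeries (S p)).coeff n =
      Nat.card {x : ι → ℕ | (∀ p, x p ∈ S p) ∧ n = ∑ p, x p} := by
  classical
  let T := (Finset.univ.finsuppAntidiag n).filter fun l : ι →₀ ℕ => ∀ p, l p ∈ S p
  have hcoeff : (∏ p, indicatorSeries (S p)).coeff n = T.card := by
    rw [PowerSeries.coeff_prod, Finset.card_filter]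
    refine Finset.sum_congr rfl fun l _ => ?_
    simp [indicatorSeries, Set.indicator_apply, Finset.prod_ite_zero]
  have hmem (l : ι →₀ ℕ) : l ∈ T ↔ (∀ p, l p ∈ S p) ∧ n = ∑ p, l p := by
    simp [T, and_comm, eq_comm]
  rw [hcoeff, ← Nat.subtype_card T hmem]
  exact Nat.card_congr (Finsupp.equivFunOnFinite.subtypeEquiv fun _ => Iff.rfl)

theorem frequently_coeff_ne_zero_of_dvd {S : Set ℕ} (hS : S.Infinite) {P : ℕ⟦X⟧}
    (h : indicatorSeries S ∣ P) (hP : P ≠ 0) : ∃ᶠ n in atTop, P.coeff n ≠ 0 := by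
  obtain ⟨b, hb⟩ := exists_coeff_le_coeff_add_of_dvd h hP
  refine (tendsto_add_atTop_nat b).frequently
    ((Nat.frequently_atTop_iff_infinite.2 hS).mono fun n hn => ?_)
  exact ((Nat.pos_of_ne_zero (coeff_indicatorSeries_ne_zero.2 hn)).trans_le (hb n)).ne'

theorem coeff_prod_indicatorSeries_pow (A : Set ℕ) {r : ℕ} {k : Fin r → ℕ} (hk : ∀ i, 0 < k i)
    (m : Fin r → ℕ) (n : ℕ) :
    (∏ i, indicatorSeries ((k i * ·) '' A) ^ m i).coeff n = reprFn A r k m n := by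
  let dilate (a : (i : Fin r) → Fin (m i) → ℕ) (p : Σ i, Fin (m i)) : ℕ := k p.1 * a p.1 p.2
  have hdilate : dilate.Injective := fun a b hab => funext₂ fun i j =>
    Nat.eq_of_mul_eq_mul_left (hk i) (congrFun hab ⟨i, j⟩)
  have hprod : ∏ i, indicatorSeries ((k i * ·) '' A) ^ m i =
      ∏ p : Σ i, Fin (m i), indicatorSeries ((k p.1 * ·) '' A) := by
    simp [Fintype.prod_sigma]
  have hsum (a : (i : Fin r) → Fin (m i) → ℕ) : ∑ p, dilate a p = ∑ i, k i * ∑ j, a i j := by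
    simp [dilate, Fintype.sum_sigma, Finset.mul_sum]
  rw [hprod, coeff_prod_indicatorSeries, reprFn, ← Set.coe_ofPred,
    ← Nat.card_image_of_injective hdilate]
  congr! 2
  ext x
  constructor
  · rintro ⟨hx, rfl⟩
    choose a ha hax using hx
    obtain rfl : dilate (fun i j => a ⟨i, j⟩) = x := funext hax
    exact ⟨_, ⟨fun i j => ha ⟨i, j⟩, hsum fun i j => a ⟨i, j⟩⟩, rfl⟩
  · rintro ⟨a, ⟨ha, rfl⟩, rfl⟩
    exact ⟨fun p => ⟨_, ha p.1 p.2, rfl⟩, (hsum a).symm⟩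

theorem frequently_coeff_prod_indicatorSeries_pow_ne_zero {ι : Type*} [Fintype ι] {A : Set ℕ}
    (hA : A.Infinite) {k m : ι → ℕ} (hk : ∀ i, 0 < k i) (hm : ∃ i, m i ≠ 0) :
    ∃ᶠ n in atTop, (∏ i, indicatorSeries ((k i * ·) '' A) ^ m i).coeff n ≠ 0 := by
  obtain ⟨i, hi⟩ := hm
  have hinf : ((k i * ·) '' A).Infinite := hA.image (mul_right_injective₀ (hk i).ne').injOn
  exact frequently_coeff_ne_zero_of_dvd hinf
    ((dvd_pow_self _ hi).trans (Finset.dvd_prod_of_mem _ (Finset.mem_univ i)))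
    (Finset.prod_ne_zero_iff.2 fun j _ =>
      pow_ne_zero _ (indicatorSeries_ne_zero (hA.nonempty.image _)))

theorem stmt1_general (A : Set ℕ) (hA : A.Infinite) (r : ℕ) (k m : Fin r → ℕ)
    (hk : ∀ i, 0 < k i) (hs : 2 ≤ Finset.univ.gcd m) :
    ∀ (c : ℕ) (N : ℕ), ∃ n > N, reprFn A r k m n ≠ c := by
  intro c N
  by_contra! hconst
  obtain ⟨G, hG⟩ := exists_pow_eq_prod_pow Finset.univ
    (fun i => indicatorSeries ((k i * ·) '' A)) fun i hi => Finset.gcd_dvd (f := m) hi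
  have hcoeff : ∀ᶠ n in atTop, (G ^ Finset.univ.gcd m).coeff n = c :=
    (eventually_gt_atTop N).mono fun n hn => by
      rw [← hG, coeff_prod_indicatorSeries_pow A hk, hconst n hn]
  obtain rfl : c = 0 := eq_zero_of_eventually_coeff_pow_eq_nat hs hcoeff
  have hm : ∃ i, m i ≠ 0 := by
    by_contra! hm
    have := Finset.gcd_eq_zero_iff.2 fun i (_ : i ∈ Finset.univ) => hm i
    omega
  exact frequently_coeff_prod_indicatorSeries_pow_ne_zero hA hk hm (by simpa [hG] using hcoeff)

theorem stmt1 (A : Set ℕ) (hA : A.Infinite) (hApos : ∀ a ∈ A, 0 < a)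
    (r : ℕ) (hr : 1 ≤ r) (k m : Fin r → ℕ)
    (hk : ∀ i, 0 < k i) (hkmono : StrictMono k) (hm : ∀ i, 0 < m i)
    (s : ℕ) (hs : s = Finset.univ.gcd m) (hs2 : 2 ≤ s) :
    ∀ (c : ℕ) (N : ℕ), ∃ n > N, reprFn A r k m n ≠ c :=
  stmt1_general A hA r k m hk (hs ▸ hs2)
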